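/- Let (α,β) be a pair of real numbers satisfying condition B₁. Then there exists a constant K₂ > 0, depending only on (α,β), such that for every ℵ > 2 the following holds. Set A_n = Γ_{α,β}(2^n), B_n = Γ_α(2^n), l_n = e^{−n²}/(16 ℵ A_n B_n 2^n) and w_n = l_n/(ℵ 4^n A_n). Then there exists a sequence of real positive numbers d_n⁰ > 0 (n ≥ 0) such that w_{n+1}/4 = w_n ℵ e^{−2π 2^n d_n⁰}/d_n⁰ for every n ≥ 0, and ∑_{n≥0} d_n⁰ ≤ K₂ (1 + log ℵ). -/

import Mathlib

noncomputable def distNearestInt (x : ℝ) : ℝ := |x - round x|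

noncomputable def GammaA (α : ℝ) (N : ℕ) : ℝ :=
  sSup ((fun n : ℤ => (distNearestInt ((n : ℝ) * α))⁻¹) '' {n : ℤ | n ≠ 0 ∧ |n| ≤ (N : ℤ)})

noncomputable def GammaAB (α β : ℝ) (N : ℕ) : ℝ :=
  sSup ((fun n : ℤ => (distNearestInt ((n : ℝ) * α - β))⁻¹) '' {n : ℤ | |n| ≤ (N : ℤ)})

def IsNonRationalPair (α β : ℝ) : Prop := ∀ k m : ℤ, (k : ℝ) * α - β ≠ (m : ℝ)

def BrjunoCond (α : ℝ) : Prop :=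
  Summable (fun N : ℕ => Real.log (GammaA α (N + 1)) / ((N : ℝ) + 1) ^ 2)

def Strip (δ : ℝ) : Set ℂ := {θ : ℂ | |θ.im| < δ}

/-- Condition B₁ for a pair (α,β). -/
def BrjunoPairCond (α β : ℝ) : Prop :=
  Irrational α ∧ IsNonRationalPair α β ∧ BrjunoCond α ∧
    Summable (fun n : ℕ => Real.log (GammaAB α β (n + 1)) / ((n : ℝ) + 1) ^ 2)

theorem distNearestInt_pos {x : ℝ} (hx : ∀ m : ℤ, x ≠ m) : 0 < distNearestInt x :=
  abs_pos.mpr (sub_ne_zero.mpr (hx _))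

theorem one_le_inv_distNearestInt {x : ℝ} (hx : ∀ m : ℤ, x ≠ m) :
    1 ≤ (distNearestInt x)⁻¹ :=
  (one_le_inv₀ (distNearestInt_pos hx)).mpr ((abs_sub_round x).trans (by norm_num))

theorem finite_setOf_abs_le (N : ℕ) : {n : ℤ | |n| ≤ (N : ℤ)}.Finite :=
  (Set.finite_Icc (-(N : ℤ)) N).subset fun _ hn => abs_le.mp hn

theorem finite_setOf_ne_zero_and_abs_le (N : ℕ) : {n : ℤ | n ≠ 0 ∧ |n| ≤ (N : ℤ)}.Finite :=
  (finite_setOf_abs_le N).subset fun _ hn => hn.2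

theorem one_le_GammaA {α : ℝ} (hα : Irrational α) {N : ℕ} (hN : 1 ≤ N) : 1 ≤ GammaA α N := by
  have hx : ∀ m : ℤ, ((1 : ℤ) : ℝ) * α ≠ m := fun m => by simpa using hα.ne_int m
  refine (one_le_inv_distNearestInt hx).trans ?_
  refine le_csSup ((finite_setOf_ne_zero_and_abs_le N).image _).bddAbove ⟨1, ?_, rfl⟩
  exact ⟨one_ne_zero, by simpa using hN⟩

theorem GammaA_mono {α : ℝ} {M N : ℕ} (hM : 1 ≤ M) (hMN : M ≤ N) : GammaA α M ≤ GammaA α N := by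
  refine csSup_le_csSup ((finite_setOf_ne_zero_and_abs_le N).image _).bddAbove ?_ ?_
  · exact ⟨_, 1, ⟨one_ne_zero, by simpa using hM⟩, rfl⟩
  · exact Set.image_mono fun n hn => ⟨hn.1, hn.2.trans (by exact_mod_cast hMN)⟩

theorem one_le_GammaAB {α β : ℝ} (h : IsNonRationalPair α β) (N : ℕ) : 1 ≤ GammaAB α β N := by
  refine (one_le_inv_distNearestInt (h 0)).trans ?_
  exact le_csSup ((finite_setOf_abs_le N).image _).bddAbove ⟨0, by simp, rfl⟩

theorem GammaAB_mono (α β : ℝ) : Monotone (GammaAB α β) := by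
  intro M N hMN
  refine csSup_le_csSup ((finite_setOf_abs_le N).image _).bddAbove ?_ ?_
  · exact ⟨_, 0, by simp, rfl⟩
  · exact Set.image_mono fun n (hn : |n| ≤ (M : ℤ)) => hn.trans (by exact_mod_cast hMN)

/-- Condensation for a nonnegative nondecreasing sequence weighted by inverse squares. -/
theorem summable_div_two_pow_of_summable_div_sq {g : ℕ → ℝ} (hg : ∀ N, 1 ≤ N → 0 ≤ g N)
    (hmono : ∀ M N, 1 ≤ M → M ≤ N → g M ≤ g N)
    (hs : Summable fun N : ℕ => g (N + 1) / ((N : ℝ) + 1) ^ 2) :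
    Summable fun n : ℕ => g (2 ^ n) / 2 ^ n := by
  have hblock : ∀ k : ℕ, g (2 ^ k) / 2 ^ k ≤
      4 * ∑ N ∈ Finset.Ico (2 ^ k) (2 ^ (k + 1)), g N / (N : ℝ) ^ 2 := by
    intro k
    have hterm : ∀ N ∈ Finset.Ico (2 ^ k) (2 ^ (k + 1)),
        g (2 ^ k) / (2 ^ (k + 1)) ^ 2 ≤ g N / (N : ℝ) ^ 2 := by
      intro N hN
      obtain ⟨h1, h2⟩ := Finset.mem_Ico.mp hN
      have hpos : 1 ≤ 2 ^ k := Nat.one_le_two_pow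
      have hN0 : (0 : ℝ) < N := by exact_mod_cast lt_of_lt_of_le hpos h1
      have hN2 : (N : ℝ) ≤ 2 ^ (k + 1) := by exact_mod_cast h2.le
      exact div_le_div₀ (hg N (hpos.trans h1)) (hmono _ _ hpos h1) (by positivity) (by gcongr)
    have hsum := Finset.card_nsmul_le_sum _ _ _ hterm
    have hcard : (Finset.Ico (2 ^ k) (2 ^ (k + 1))).card = 2 ^ k := by
      rw [Nat.card_Ico, pow_succ]; omega
    rw [hcard, nsmul_eq_mul] at hsum
    calc g (2 ^ k) / 2 ^ k
        = 4 * (((2 ^ k : ℕ) : ℝ) * (g (2 ^ k) / (2 ^ (k + 1)) ^ 2)) := by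
          push_cast; field_simp; ring
      _ ≤ _ := by gcongr
  have hpartial : ∀ n : ℕ, ∑ k ∈ Finset.range n, g (2 ^ k) / 2 ^ k ≤
      4 * ∑ N ∈ Finset.Ico 1 (2 ^ n), g N / (N : ℝ) ^ 2 := by
    intro n
    induction n with
    | zero => simp
    | succ n ih =>
      rw [Finset.sum_range_succ, ← Finset.sum_Ico_consecutive _ (Nat.one_le_two_pow (n := n))
        (Nat.pow_le_pow_right two_pos n.le_succ), mul_add]
      exact add_le_add ih (hblock n)
  refine summable_of_sum_range_le
    (c := 4 * ∑' N : ℕ, g (N + 1) / ((N : ℝ) + 1) ^ 2)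
    (fun n => div_nonneg (hg _ Nat.one_le_two_pow) (by positivity)) fun n => ?_
  refine (hpartial n).trans ?_
  rw [Finset.sum_Ico_eq_sum_range]
  gcongr
  refine le_trans (le_of_eq ?_) (hs.sum_le_tsum (Finset.range (2 ^ n - 1)) fun N _ =>
    div_nonneg (hg _ (by omega)) (by positivity))
  exact Finset.sum_congr rfl fun N _ => by rw [add_comm 1 N]; push_cast; rfl

theorem summable_log_comp_two_pow_succ {Γ : ℕ → ℝ} (hΓ : ∀ N, 1 ≤ N → 1 ≤ Γ N)
    (hmono : ∀ M N, 1 ≤ M → M ≤ N → Γ M ≤ Γ N)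
    (hs : Summable fun N : ℕ => Real.log (Γ (N + 1)) / ((N : ℝ) + 1) ^ 2) :
    Summable fun n : ℕ => Real.log (Γ (2 ^ (n + 1))) / 2 ^ n := by
  have h := summable_div_two_pow_of_summable_div_sq (g := fun N => Real.log (Γ N))
    (fun N hN => Real.log_nonneg (hΓ N hN))
    (fun M N hM hMN => Real.log_le_log (one_pos.trans_le (hΓ M hM)) (hmono M N hM hMN)) hs
  refine (((summable_nat_add_iff 1).mpr h).mul_left 2).congr fun n => ?_
  rw [pow_succ (2 : ℝ) n]
  field_simp

/-- The equation `d * exp (2π T d) = R` has a positive solution of size `O((1 + log (T R)) / T)`. -/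
theorem exists_pos_mul_exp_eq {T R : ℝ} (hT : 1 ≤ T) (hR : 1 ≤ R) :
    ∃ d : ℝ, 0 < d ∧ d ≤ (1 + Real.log (T * R)) / T ∧
      d * Real.exp (2 * Real.pi * T * d) = R := by
  have hT0 : 0 < T := by linarith
  have hlog : 0 ≤ Real.log (T * R) := Real.log_nonneg (by nlinarith)
  set U := (1 + Real.log (T * R)) / T with hU
  have hU0 : 0 ≤ U := by positivity
  have hTU : T * U = 1 + Real.log (T * R) := by rw [hU]; field_simp
  have hUR : R ≤ U * Real.exp (2 * Real.pi * T * U) := by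
    have h1 : T * R ≤ Real.exp (2 * Real.pi * T * U) := by
      rw [← Real.log_le_iff_le_exp (by positivity), mul_assoc, hTU]
      nlinarith [Real.pi_gt_three]
    calc R = 1 / T * (T * R) := by field_simp
      _ ≤ U * Real.exp (2 * Real.pi * T * U) := by
        refine mul_le_mul ?_ h1 (by positivity) hU0
        rw [hU]; gcongr; linarith
  obtain ⟨d, ⟨hd0, hdU⟩, hd⟩ := intermediate_value_Icc hU0
    (f := fun d => d * Real.exp (2 * Real.pi * T * d)) (by fun_prop)
    (show R ∈ Set.Icc _ _ from ⟨by simp; linarith, hUR⟩)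
  refine ⟨d, lt_of_le_of_ne hd0 ?_, hdU, hd⟩
  rintro rfl
  simp at hd
  linarith

theorem log_two_pow_mul_ratio_le {x A A' B B' : ℝ} (n : ℕ) (hx : 2 < x) (hA : 1 ≤ A)
    (hA' : 1 ≤ A') (hB : 1 ≤ B) (hB' : 1 ≤ B') :
    Real.log (2 ^ n * (32 * x * Real.exp (2 * n + 1) * (A' ^ 2 * B') / (A ^ 2 * B))) ≤
      3 * n + 32 + Real.log x + 2 * Real.log A' + Real.log B' := by
  have hx0 : 0 < x := by linarith
  have hAB : 1 ≤ A ^ 2 * B := one_le_mul_of_one_le_of_one_le (one_le_pow₀ hA) hB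
  have hle : 2 ^ n * (32 * x * Real.exp (2 * n + 1) * (A' ^ 2 * B') / (A ^ 2 * B)) ≤
      2 ^ n * (32 * x * Real.exp (2 * n + 1) * (A' ^ 2 * B')) := by
    gcongr
    exact div_le_self (by positivity) hAB
  refine (Real.log_le_log (by positivity) hle).trans ?_
  rw [Real.log_mul (by positivity) (by positivity), Real.log_mul (by positivity) (by positivity),
    Real.log_mul (by positivity) (by positivity), Real.log_mul (by positivity) (by positivity),
    Real.log_mul (by positivity) (by positivity), Real.log_exp, Real.log_pow, Real.log_pow]
  have h2 : (n : ℝ) * Real.log 2 ≤ n * 1 := by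
    gcongr
    linarith [Real.log_two_lt_d9]
  have h32 := Real.log_le_sub_one_of_pos (show (0 : ℝ) < 32 by norm_num)
  push_cast
  linarith

/-- existence of the sequence of strip-width losses d_n⁰ with summable
total loss, controlled by K₂(1 + log ℵ). -/
theorem stmt_12 (α β : ℝ) (hB1 : BrjunoPairCond α β) :
    ∃ K₂ : ℝ, 0 < K₂ ∧
      ∀ aleph : ℝ, 2 < aleph →
        ∀ l w : ℕ → ℝ,
          (∀ n : ℕ, l n = Real.exp (-(n : ℝ) ^ 2) /
              (16 * aleph * GammaAB α β (2 ^ n) * GammaA α (2 ^ n) * 2 ^ n)) →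
          (∀ n : ℕ, w n = l n / (aleph * 4 ^ n * GammaAB α β (2 ^ n))) →
          ∃ d : ℕ → ℝ, (∀ n : ℕ, 0 < d n) ∧
            (∀ n : ℕ, w (n + 1) / 4 =
              w n * aleph * Real.exp (-(2 * Real.pi * 2 ^ n * d n)) / d n) ∧
            Summable d ∧ (∑' n : ℕ, d n) ≤ K₂ * (1 + Real.log aleph) := by
  obtain ⟨hirr, hnr, hbr, hbr'⟩ := hB1
  have hA1 : ∀ n : ℕ, 1 ≤ GammaAB α β (2 ^ n) := fun n => one_le_GammaAB hnr _
  have hB1 : ∀ n : ℕ, 1 ≤ GammaA α (2 ^ n) := fun n => one_le_GammaA hirr Nat.one_le_two_pow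
  have hsA := summable_log_comp_two_pow_succ (fun N _ => one_le_GammaAB hnr N)
    (fun M N _ h => GammaAB_mono α β h) hbr'
  have hsB := summable_log_comp_two_pow_succ (fun N hN => one_le_GammaA hirr hN)
    (fun M N hM h => GammaA_mono hM h) hbr
  have hgeo : Summable fun n : ℕ => ((1 / 2 : ℝ)) ^ n := summable_geometric_two
  have hngeo : Summable fun n : ℕ => (n : ℝ) * (1 / 2 : ℝ) ^ n := by
    simpa using summable_pow_mul_geometric_of_norm_lt_one (R := ℝ) 1 (r := 1 / 2) (by norm_num)
  set c : ℕ → ℝ := fun n => 3 * ((n : ℝ) * (1 / 2 : ℝ) ^ n) + 33 * (1 / 2 : ℝ) ^ n +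
    2 * (Real.log (GammaAB α β (2 ^ (n + 1))) / 2 ^ n) +
    Real.log (GammaA α (2 ^ (n + 1))) / 2 ^ n with hc
  have hcs : Summable c :=
    (((hngeo.mul_left 3).add (hgeo.mul_left 33)).add (hsA.mul_left 2)).add hsB
  have hc0 : 0 ≤ ∑' n, c n := tsum_nonneg fun n => by
    have h1 := Real.log_nonneg (hA1 (n + 1))
    have h2 := Real.log_nonneg (hB1 (n + 1))
    positivity
  refine ⟨∑' n, c n + 2, by linarith, fun x hx l w hl hw => ?_⟩
  have hx0 : 0 < x := by linarith
  have hlogx : 0 ≤ Real.log x := Real.log_nonneg (by linarith)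
  set R : ℕ → ℝ := fun n => 32 * x * Real.exp (2 * n + 1) *
    (GammaAB α β (2 ^ (n + 1)) ^ 2 * GammaA α (2 ^ (n + 1))) /
    (GammaAB α β (2 ^ n) ^ 2 * GammaA α (2 ^ n)) with hR
  have hR1 : ∀ n, 1 ≤ R n := by
    intro n
    have h1 := hA1 n
    have h2 := hB1 n
    have h3 : GammaAB α β (2 ^ n) ≤ GammaAB α β (2 ^ (n + 1)) :=
      GammaAB_mono α β (Nat.pow_le_pow_right two_pos n.le_succ)
    have h4 : GammaA α (2 ^ n) ≤ GammaA α (2 ^ (n + 1)) :=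
      GammaA_mono Nat.one_le_two_pow (Nat.pow_le_pow_right two_pos n.le_succ)
    have h3' := h1.trans h3
    have h4' := h2.trans h4
    have h5 : 1 ≤ Real.exp (2 * (n : ℝ) + 1) := Real.one_le_exp (by positivity)
    have h6 : 1 ≤ 32 * x * Real.exp (2 * (n : ℝ) + 1) :=
      one_le_mul_of_one_le_of_one_le (by linarith) h5
    simp only [hR]
    rw [one_le_div (by positivity)]
    calc _ ≤ GammaAB α β (2 ^ (n + 1)) ^ 2 * GammaA α (2 ^ (n + 1)) := by gcongr
      _ ≤ _ := le_mul_of_one_le_left (by positivity) h6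
  choose d hd0 hdU hd using fun n : ℕ =>
    exists_pos_mul_exp_eq (one_le_pow₀ one_le_two : (1 : ℝ) ≤ 2 ^ n) (hR1 n)
  have hdle : ∀ n, d n ≤ c n + Real.log x * (1 / 2 : ℝ) ^ n := by
    intro n
    have h := log_two_pow_mul_ratio_le n hx (hA1 n) (hA1 (n + 1)) (hB1 n) (hB1 (n + 1))
    calc d n ≤ (1 + Real.log (2 ^ n * R n)) / 2 ^ n := hdU n
      _ ≤ (1 + (3 * n + 32 + Real.log x + 2 * Real.log (GammaAB α β (2 ^ (n + 1))) +
          Real.log (GammaA α (2 ^ (n + 1))))) / 2 ^ n := by gcongr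
      _ = _ := by
        simp only [hc, one_div, inv_pow]
        field_simp
        ring
  have hbs : Summable fun n : ℕ => c n + Real.log x * (1 / 2 : ℝ) ^ n :=
    hcs.add (hgeo.mul_left _)
  have hds : Summable d := hbs.of_nonneg_of_le (fun n => (hd0 n).le) hdle
  refine ⟨d, hd0, fun n => ?_, hds, ?_⟩
  · have hA := hA1 n
    have hA' := hA1 (n + 1)
    have hB := hB1 n
    have hB' := hB1 (n + 1)
    have hdn := hd0 n
    have hexp : Real.exp (-((n + 1 : ℕ) : ℝ) ^ 2) * Real.exp (2 * n + 1) =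
        Real.exp (-(n : ℝ) ^ 2) := by
      rw [← Real.exp_add]; congr 1; push_cast; ring
    have hwR : w (n + 1) * R n = 4 * (w n * x) := by
      rw [hw, hw, hl, hl, ← hexp, hR]
      field_simp
      ring
    rw [Real.exp_neg, div_eq_div_iff (by norm_num) hdn.ne', ← div_eq_mul_inv,
      div_mul_eq_mul_div, eq_div_iff (Real.exp_pos _).ne']
    linear_combination w (n + 1) * hd n + hwR
  · calc ∑' n, d n ≤ ∑' n, (c n + Real.log x * (1 / 2 : ℝ) ^ n) := hds.tsum_le_tsum hdle hbs
      _ = ∑' n, c n + Real.log x * 2 := by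
        rw [hcs.tsum_add (hgeo.mul_left _), tsum_mul_left, tsum_geometric_two]
      _ ≤ _ := by nlinarith [mul_nonneg hc0 hlogx]
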